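/- arXiv:2011.11823 — 4 statements merged into one kernel-verified Lean document; each statement's English description precedes it below -/
import Mathlib

section
/- Suppose every morphism g of 𝒢 can be written as g = h∘k with h a morphism of H and k a morphism of K, and this factorization is unique (the unique H∘K-factorization property). Then every morphism g of 𝒢 can also be written as g = k'∘h' with h' a morphism of H and k' a morphism of K, and this factorization is also unique (the unique K∘H-factorization property). (This is the paper's claim that in a vacant double Lie groupoid every element m(h,k) can also be written as m(k̄,h̄) for unique k̄ ∈ K, h̄ ∈ H.) -/
/- STATEMENT 0: If (𝒢, H, K) has the unique H∘K-factorization property (every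
morphism g of 𝒢 factors uniquely as g = h∘k with h ∈ H, k ∈ K; recall h∘k means
"first k, then h", i.e. `k ≫ h` in Lean notation), then it also has the unique
K∘H-factorization property (every g factors uniquely as g = k'∘h' = `h' ≫ k'`
with h' ∈ H, k' ∈ K).  Here 𝒢 is a groupoid with objects S and H, K are wide
subgroupoids of 𝒢. -/

open CategoryTheory

theorem stmt0 {S : Type*} [Groupoid S] (H K : Subgroupoid S)
    (hHwide : H.IsWide) (hKwide : K.IsWide)
    -- unique H∘K-factorization: g = h∘k, i.e. g = k ≫ h with k ∈ K first, h ∈ H second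
    (hHK : ∀ ⦃x y : S⦄ (g : x ⟶ y),
      ∃! p : Σ w : S, (x ⟶ w) × (w ⟶ y),
        p.2.1 ∈ K.arrows x p.1 ∧ p.2.2 ∈ H.arrows p.1 y ∧ g = p.2.1 ≫ p.2.2) :
    -- unique K∘H-factorization: g = k'∘h', i.e. g = h' ≫ k' with h' ∈ H first, k' ∈ K second
    ∀ ⦃x y : S⦄ (g : x ⟶ y),
      ∃! p : Σ w : S, (x ⟶ w) × (w ⟶ y),
        p.2.1 ∈ H.arrows x p.1 ∧ p.2.2 ∈ K.arrows p.1 y ∧ g = p.2.1 ≫ p.2.2 := by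
  -- Inversion exchanges the two kinds of factorization: `g = h ≫ k` iff `g⁻¹ = k⁻¹ ≫ h⁻¹`.
  intro x y g
  obtain ⟨⟨w, k, h⟩, ⟨hk, hh, hg⟩, huniq⟩ := hHK (Groupoid.inv g)
  dsimp only at hk hh hg
  refine ⟨⟨w, Groupoid.inv h, Groupoid.inv k⟩, ⟨H.inv hh, K.inv hk, ?_⟩, ?_⟩
  · have hinv := congrArg Groupoid.inv hg
    simpa [Groupoid.inv_eq_inv] using hinv
  · rintro ⟨w', h', k'⟩ ⟨hh', hk', hg'⟩
    dsimp only at hh' hk' hg'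
    have heq := huniq ⟨w', Groupoid.inv k', Groupoid.inv h'⟩
      ⟨K.inv hk', H.inv hh', by simp [hg', Groupoid.inv_eq_inv]⟩
    -- Transport the equality of dependent pairs along inversion of both components.
    have hback := congrArg (fun p : Σ w : S, (y ⟶ w) × (w ⟶ x) =>
      (⟨p.1, Groupoid.inv p.2.2, Groupoid.inv p.2.1⟩ : Σ w : S, (x ⟶ w) × (w ⟶ y))) heq
    simpa [Groupoid.inv_eq_inv] using hback
end

section
/- Assume the unique K∘H-factorization property and that H has trivial isotropy. Let k₁, k₂, k₁', k₂' be morphisms of K and h₁, h₂ morphisms of H with s(h₁) = t(k₁'), t(h₁) = s(k₁), s(h₂) = t(k₂'), and t(h₂) = s(k₂). If k₁ ~_H k₂ and k₁' ~_H k₂', then k₁ ∘ σ(h₁, k₁') ~_H k₂ ∘ σ(h₂, k₂'). (This is the well-definedness of the multiplication on the orbit space K/H established in the proof of Theorem 3.4.) -/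
/-!
Trivial isotropy of `H` says that parallel morphisms of `H` coincide. If `k₁ ≫ a = b ≫ k₂` and
`k₁' ≫ c = d ≫ k₂'` witness the two equivalences, then `h₁ ≫ b` and `c ≫ h₂` are parallel
morphisms of `H`, hence equal. The two commuting squares can therefore be pasted along this
identity, and `a` together with `τ₁⁻¹ ≫ d ≫ τ₂` witnesses the equivalence of the composites.
-/

open CategoryTheory

/-- `(𝒢,H,K)` has the *unique K∘H-factorization property* if every morphism `g`
of the groupoid `𝒢` (with objects `S`) can be written as `g = k∘h` with `h` a
morphism of `H` and `k` a morphism of `K`, and this factorization is unique.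
Recall `k∘h` means "first `h`, then `k`", i.e. `h ≫ k` in Lean notation. -/
def UniqueKHFactorization {S : Type*} [Groupoid S] (H K : Subgroupoid S) : Prop :=
  ∀ ⦃x y : S⦄ (g : x ⟶ y),
    ∃! p : Σ w : S, (x ⟶ w) × (w ⟶ y),
      p.2.1 ∈ H.arrows x p.1 ∧ p.2.2 ∈ K.arrows p.1 y ∧ g = p.2.1 ≫ p.2.2

/-- The relation `k ~_H k'` on morphisms (encoded as triples `⟨source, target,
morphism⟩`): there exists `h ∈ H` with `s(h) = t(k)` such that `σ(h,k) = k'`.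
Under the unique K∘H-factorization property, `σ(h,k) = k'` is equivalent to
the existence of `τ ∈ H` with `h∘k = k'∘τ`, i.e. `k ≫ h = τ ≫ k'`, which is
how it is encoded here. -/
def KHRel {S : Type*} [Groupoid S] (H : Subgroupoid S) :
    (Σ a b : S, a ⟶ b) → (Σ a b : S, a ⟶ b) → Prop :=
  fun k k' => ∃ (h : k.2.1 ⟶ k'.2.1) (τ : k.1 ⟶ k'.1),
    h ∈ H.arrows k.2.1 k'.2.1 ∧ τ ∈ H.arrows k.1 k'.1 ∧ k.2.2 ≫ h = τ ≫ k'.2.2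

/- STATEMENT 9: assume the unique K∘H-factorization property and that `H` has
trivial isotropy.  Let `k₁, k₂, k₁', k₂' ∈ K` and `h₁, h₂ ∈ H` with
`s(h₁) = t(k₁')`, `t(h₁) = s(k₁)`, `s(h₂) = t(k₂')`, `t(h₂) = s(k₂)`.
If `k₁ ~_H k₂` and `k₁' ~_H k₂'`, then
`k₁ ∘ σ(h₁,k₁') ~_H k₂ ∘ σ(h₂,k₂')`.
Below `(τ₁,σ₁)` is the factorization of `h₁∘k₁'` (so `σ₁ = σ(h₁,k₁')`) and
`(τ₂,σ₂)` is that of `h₂∘k₂'` (so `σ₂ = σ(h₂,k₂')`); the composite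
`k₁ ∘ σ(h₁,k₁')` is `σ₁ ≫ k₁`. -/

theorem stmt9 {S : Type*} [Groupoid S] (H K : Subgroupoid S)
    (hHwide : H.IsWide) (hKwide : K.IsWide)
    (hfac : UniqueKHFactorization H K)
    -- H has trivial isotropy:
    (htriv : ∀ (a : S) (f : a ⟶ a), f ∈ H.arrows a a → f = 𝟙 a)
    {x₁ y₁ x₂ y₂ x₁' y₁' x₂' y₂' : S}
    (k₁ : x₁ ⟶ y₁) (k₂ : x₂ ⟶ y₂) (k₁' : x₁' ⟶ y₁') (k₂' : x₂' ⟶ y₂')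
    (hk₁ : k₁ ∈ K.arrows x₁ y₁) (hk₂ : k₂ ∈ K.arrows x₂ y₂)
    (hk₁' : k₁' ∈ K.arrows x₁' y₁') (hk₂' : k₂' ∈ K.arrows x₂' y₂')
    (h₁ : y₁' ⟶ x₁) (h₂ : y₂' ⟶ x₂)
    (hh₁ : h₁ ∈ H.arrows y₁' x₁) (hh₂ : h₂ ∈ H.arrows y₂' x₂)
    -- the factorization h₁∘k₁' = σ₁∘τ₁, i.e. σ₁ = σ(h₁,k₁'):
    {w₁ : S} (τ₁ : x₁' ⟶ w₁) (σ₁ : w₁ ⟶ x₁)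
    (hτ₁ : τ₁ ∈ H.arrows x₁' w₁) (hσ₁ : σ₁ ∈ K.arrows w₁ x₁)
    (e₁ : k₁' ≫ h₁ = τ₁ ≫ σ₁)
    -- the factorization h₂∘k₂' = σ₂∘τ₂, i.e. σ₂ = σ(h₂,k₂'):
    {w₂ : S} (τ₂ : x₂' ⟶ w₂) (σ₂ : w₂ ⟶ x₂)
    (hτ₂ : τ₂ ∈ H.arrows x₂' w₂) (hσ₂ : σ₂ ∈ K.arrows w₂ x₂)
    (e₂ : k₂' ≫ h₂ = τ₂ ≫ σ₂)
    -- hypotheses: k₁ ~_H k₂ and k₁' ~_H k₂':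
    (r : KHRel H ⟨x₁, y₁, k₁⟩ ⟨x₂, y₂, k₂⟩)
    (r' : KHRel H ⟨x₁', y₁', k₁'⟩ ⟨x₂', y₂', k₂'⟩) :
    -- conclusion: k₁ ∘ σ(h₁,k₁') ~_H k₂ ∘ σ(h₂,k₂'):
    KHRel H ⟨w₁, y₁, σ₁ ≫ k₁⟩ ⟨w₂, y₂, σ₂ ≫ k₂⟩ := by
  obtain ⟨a, b, ha, hb, e⟩ := r
  obtain ⟨c, d, hc, hd, f⟩ := r'
  dsimp only at a b ha hb e c d hc hd f
  -- Trivial isotropy of `H` makes parallel morphisms of `H` equal.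
  have key : h₁ ≫ b = c ≫ h₂ := by
    have h := htriv _ _ (H.mul (H.mul hh₁ hb) (H.inv (H.mul hc hh₂)))
    rw [Groupoid.inv_eq_inv, IsIso.comp_inv_eq, Category.id_comp] at h
    exact h
  refine ⟨a, Groupoid.inv τ₁ ≫ d ≫ τ₂, ha, H.mul (H.inv hτ₁) (H.mul hd hτ₂), ?_⟩
  have hσ : σ₁ ≫ b = Groupoid.inv τ₁ ≫ d ≫ τ₂ ≫ σ₂ := by
    rw [← e₂, ← reassoc_of% f, ← key, reassoc_of% e₁, Groupoid.inv_eq_inv,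
      IsIso.inv_hom_id_assoc]
  dsimp only
  simp only [Category.assoc]
  rw [e, reassoc_of% hσ]
end

section
/- Assume the unique K∘H-factorization property and that H has trivial isotropy. Let S̄ be the quotient of S by the relation 'x and y lie in the same H-orbit', and let K̄ be the quotient of the set of morphisms of K by the relation ~_H, with [·] denoting equivalence classes. Then there is a groupoid structure with set of objects S̄ and set of morphisms K̄ in which: the source and target of [k] are [s(k)] and [t(k)]; the identity at [x] is [id_x]; and the composite of [k] and [k'] (defined whenever [s(k)] = [t(k')]) is [k ∘ σ(h, k')] for the unique h in H with s(h) = t(k') and t(h) = s(k). Moreover, with this structure the quotient maps (on objects and on morphisms) constitute a functor (a groupoid morphism) from K to this quotient groupoid, and this is the unique groupoid structure on (S̄, K̄) with these source, target and identity maps for which the quotient maps form a functor. (This is the algebraic content of Theorem 3.4: the orbit space K/𝒢 inherits a unique groupoid structure over S/H such that the projection K → K/𝒢 is a groupoid morphism.) -/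
/-!
Two facts carry the construction. A class in `K/~_H` whose source is the orbit of `x` has a
representative with source exactly `x` (`exists_rep_src`): factor `(h ≫ k)⁻¹` as an arrow of `H`
followed by an arrow of `K`, and invert. So composable classes, and chains of composable classes,
have strictly composable representatives in `K`. Conversely, the class of a strict composite depends
only on the classes of the two factors (`quotCompRel_unique`): the two squares witnessing the
equivalences meet along two parallel arrows of `H`, which agree because `H` has trivial isotropy,
and so the squares can be pasted. The composite in the quotient is therefore the class of the
composite of any strictly composable representatives, and the groupoid axioms are inherited from `K`.

For uniqueness, functoriality prescribes the composite of strictly composable representatives, hence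
of all composable classes, and inverses in a groupoid are determined by the remaining structure.
-/

open CategoryTheory

/-- Two objects `a, b ∈ S` lie in the same `H`-orbit if there is a morphism of
`H` from `a` to `b`. -/
def HOrbitRel {S : Type*} [Groupoid S] (H : Subgroupoid S) : S → S → Prop :=
  fun a b => ∃ f : a ⟶ b, f ∈ H.arrows a b

/-- The morphisms of `K`, encoded as triples `⟨source, target, morphism⟩`
together with a membership proof. -/
def MorK {S : Type*} [Groupoid S] (K : Subgroupoid S) :=
  {p : Σ a b : S, a ⟶ b // p.2.2 ∈ K.arrows p.1 p.2.1}

/-- A groupoid structure on a set `Ob` of objects and a set `Mor` of morphisms,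
given by source/target/identity/composition/inversion maps satisfying the usual
groupoid axioms.  The composite `comp g f _` is `g∘f` (first `f`, then `g`),
defined when `src g = tgt f`. -/
structure SetGroupoid (Ob : Type*) (Mor : Type*) where
  src : Mor → Ob
  tgt : Mor → Ob
  one : Ob → Mor
  comp : (g f : Mor) → src g = tgt f → Mor
  inv : Mor → Mor
  src_one : ∀ x, src (one x) = x
  tgt_one : ∀ x, tgt (one x) = x
  src_comp : ∀ g f hgf, src (comp g f hgf) = src f
  tgt_comp : ∀ g f hgf, tgt (comp g f hgf) = tgt g
  one_comp : ∀ (f : Mor) (h : src (one (tgt f)) = tgt f), comp (one (tgt f)) f h = f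
  comp_one : ∀ (f : Mor) (h : src f = tgt (one (src f))), comp f (one (src f)) h = f
  comp_assoc : ∀ (f g h : Mor) (p : src h = tgt g) (q : src g = tgt f)
    (r : src h = tgt (comp g f q)) (s' : src (comp h g p) = tgt f),
    comp (comp h g p) f s' = comp h (comp g f q) r
  src_inv : ∀ f, src (inv f) = tgt f
  tgt_inv : ∀ f, tgt (inv f) = src f
  inv_comp : ∀ (f : Mor) (h : src (inv f) = tgt f), comp (inv f) f h = one (src f)
  comp_inv : ∀ (f : Mor) (h : src f = tgt (inv f)), comp f (inv f) h = one (tgt f)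

section

variable {S : Type*} [Groupoid S] (H K : Subgroupoid S) (hKwide : K.IsWide)

/-- The orbit space `S̄ = S/H`. -/
abbrev QuotObj := Quot (HOrbitRel H)

/-- The quotient `K̄` of the morphisms of `K` by the relation `~_H`. -/
abbrev QuotMor := Quot (fun p q : MorK K => KHRel H p.1 q.1)

/-- The given groupoid structure on `(S̄, K̄)` has: source and target of `[k]`
equal to `[s(k)]` and `[t(k)]`, and identity at `[x]` equal to `[id_x]`. -/
def QuotSpec (G : SetGroupoid (QuotObj H) (QuotMor H K)) : Prop :=
  (∀ p : MorK K, G.src (Quot.mk _ p) = Quot.mk (HOrbitRel H) p.1.1) ∧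
  (∀ p : MorK K, G.tgt (Quot.mk _ p) = Quot.mk (HOrbitRel H) p.1.2.1) ∧
  (∀ x : S, G.one (Quot.mk (HOrbitRel H) x) =
    Quot.mk _ (⟨⟨x, x, 𝟙 x⟩, hKwide.wide x⟩ : MorK K))

/-- The quotient maps (on objects and morphisms) constitute a functor from `K`
to the given groupoid structure on `(S̄, K̄)`: they respect sources, targets,
identities (this is `QuotSpec`) and (strictly defined) composites. -/
def QuotFunctorSpec (G : SetGroupoid (QuotObj H) (QuotMor H K)) : Prop :=
  QuotSpec H K hKwide G ∧
  ∀ {a b c : S} (g : a ⟶ b) (f : b ⟶ c) (hg : g ∈ K.arrows a b)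
    (hf : f ∈ K.arrows b c)
    (hcomp : G.src (Quot.mk _ (⟨⟨b, c, f⟩, hf⟩ : MorK K)) =
      G.tgt (Quot.mk _ (⟨⟨a, b, g⟩, hg⟩ : MorK K))),
    G.comp (Quot.mk _ (⟨⟨b, c, f⟩, hf⟩ : MorK K))
      (Quot.mk _ (⟨⟨a, b, g⟩, hg⟩ : MorK K)) hcomp =
      Quot.mk _ (⟨⟨a, c, g ≫ f⟩, K.mul hg hf⟩ : MorK K)

/-- The composite of `[k]` and `[k']` is `[k ∘ σ(h,k')]` for the (unique)
`h ∈ H` with `s(h) = t(k')` and `t(h) = s(k)`; here `(τ,σ)` is a factorization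
`h∘k' = σ∘τ`, so `σ = σ(h,k')` and `k ∘ σ(h,k') = σ ≫ k`. -/
def QuotCompSpec (G : SetGroupoid (QuotObj H) (QuotMor H K)) : Prop :=
  ∀ {x y x' y' w : S} (k : x ⟶ y) (k' : x' ⟶ y') (hk : k ∈ K.arrows x y)
    (hk' : k' ∈ K.arrows x' y') (h : y' ⟶ x) (_ : h ∈ H.arrows y' x)
    (τ : x' ⟶ w) (σ : w ⟶ x) (_ : τ ∈ H.arrows x' w) (hσ : σ ∈ K.arrows w x)
    (_ : k' ≫ h = τ ≫ σ)
    (hcomp : G.src (Quot.mk _ (⟨⟨x, y, k⟩, hk⟩ : MorK K)) =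
      G.tgt (Quot.mk _ (⟨⟨x', y', k'⟩, hk'⟩ : MorK K))),
    G.comp (Quot.mk _ (⟨⟨x, y, k⟩, hk⟩ : MorK K))
      (Quot.mk _ (⟨⟨x', y', k'⟩, hk'⟩ : MorK K)) hcomp =
      Quot.mk _ (⟨⟨w, y, σ ≫ k⟩, K.mul hσ hk⟩ : MorK K)

end

section Quotient

variable {S : Type*} [Groupoid S] {H K : Subgroupoid S}

/-- The class in `QuotMor H K` of an arrow of `K`. -/
def quotCls (H : Subgroupoid S) {K : Subgroupoid S} {a b : S} (k : a ⟶ b)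
    (hk : k ∈ K.arrows a b) : QuotMor H K :=
  Quot.mk _ (⟨⟨a, b, k⟩, hk⟩ : MorK K)

lemma exists_quotCls (q : QuotMor H K) :
    ∃ (a b : S) (k : a ⟶ b) (hk : k ∈ K.arrows a b), q = quotCls H k hk := by
  obtain ⟨⟨⟨a, b, k⟩, hk⟩, rfl⟩ := Quot.exists_rep q
  exact ⟨a, b, k, hk, rfl⟩

lemma hOrbitRel_equivalence (hH : H.IsWide) : Equivalence (HOrbitRel H) where
  refl x := ⟨𝟙 x, hH.wide x⟩
  symm := fun ⟨f, hf⟩ => ⟨Groupoid.inv f, H.inv hf⟩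
  trans := fun ⟨f, hf⟩ ⟨g, hg⟩ => ⟨f ≫ g, H.mul hf hg⟩

lemma quotObj_exact (hH : H.IsWide) {x y : S}
    (h : (Quot.mk (HOrbitRel H) x : QuotObj H) = Quot.mk _ y) :
    ∃ f : x ⟶ y, f ∈ H.arrows x y :=
  (hOrbitRel_equivalence hH).eqvGen_iff.1 (Quot.eqvGen_exact h)

lemma khRel_equivalence (hH : H.IsWide) :
    Equivalence (fun p q : MorK K => KHRel H p.1 q.1) where
  refl p := ⟨𝟙 _, 𝟙 _, hH.wide _, hH.wide _, by simp⟩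
  symm := by
    rintro p q ⟨h, τ, hh, hτ, e⟩
    refine ⟨Groupoid.inv h, Groupoid.inv τ, H.inv hh, H.inv hτ, ?_⟩
    simp only [Groupoid.inv_eq_inv]
    rw [IsIso.comp_inv_eq, Category.assoc, e, IsIso.inv_hom_id_assoc]
  trans := by
    rintro p q r ⟨h, τ, hh, hτ, e⟩ ⟨h', τ', hh', hτ', e'⟩
    refine ⟨h ≫ h', τ ≫ τ', H.mul hh hh', H.mul hτ hτ', ?_⟩
    rw [← Category.assoc, e, Category.assoc, e', Category.assoc]

lemma quotCls_sound {a b a' b' : S} {k : a ⟶ b} {k' : a' ⟶ b'} {hk : k ∈ K.arrows a b}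
    {hk' : k' ∈ K.arrows a' b'} (h : b ⟶ b') (τ : a ⟶ a') (hh : h ∈ H.arrows b b')
    (hτ : τ ∈ H.arrows a a') (e : k ≫ h = τ ≫ k') :
    quotCls H k hk = quotCls H k' hk' :=
  Quot.sound ⟨h, τ, hh, hτ, e⟩

lemma quotCls_exact (hH : H.IsWide) {a b a' b' : S} {k : a ⟶ b} {k' : a' ⟶ b'}
    {hk : k ∈ K.arrows a b} {hk' : k' ∈ K.arrows a' b'}
    (e : quotCls H k hk = quotCls H k' hk') :
    ∃ (h : b ⟶ b') (τ : a ⟶ a'), h ∈ H.arrows b b' ∧ τ ∈ H.arrows a a' ∧ k ≫ h = τ ≫ k' :=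
  (khRel_equivalence hH).eqvGen_iff.1 (Quot.eqvGen_exact e)

/-- Source map of the quotient groupoid. -/
def quotSrc (H K : Subgroupoid S) : QuotMor H K → QuotObj H :=
  Quot.lift (fun p => Quot.mk _ p.1.1) fun _ _ ⟨_, τ, _, hτ, _⟩ => Quot.sound ⟨τ, hτ⟩

/-- Target map of the quotient groupoid. -/
def quotTgt (H K : Subgroupoid S) : QuotMor H K → QuotObj H :=
  Quot.lift (fun p => Quot.mk _ p.1.2.1) fun _ _ ⟨h, _, hh, _, _⟩ => Quot.sound ⟨h, hh⟩

/-- Identity map of the quotient groupoid. -/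
def quotOne (H K : Subgroupoid S) (hK : K.IsWide) : QuotObj H → QuotMor H K :=
  Quot.lift (fun x => quotCls H (𝟙 x) (hK.wide x)) fun _ _ ⟨h, hh⟩ =>
    quotCls_sound h h hh hh (by simp)

/-- Inversion map of the quotient groupoid. -/
def quotInv (H K : Subgroupoid S) : QuotMor H K → QuotMor H K :=
  Quot.lift (fun p => quotCls H (Groupoid.inv p.1.2.2) (K.inv p.2))
    fun p q ⟨h, τ, hh, hτ, e⟩ => quotCls_sound τ h hτ hh (by
      simp only [Groupoid.inv_eq_inv]
      rw [IsIso.inv_comp_eq, ← Category.assoc, e, Category.assoc, IsIso.hom_inv_id,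
        Category.comp_id])

/-- A class whose source is the orbit of `x` has a representative with source `x` itself. -/
lemma exists_rep_src (hH : H.IsWide) (hfac : UniqueKHFactorization H K) (q : QuotMor H K) (x : S)
    (hx : quotSrc H K q = Quot.mk _ x) :
    ∃ (y : S) (k : x ⟶ y) (hk : k ∈ K.arrows x y), q = quotCls H k hk := by
  obtain ⟨a, b, k, hk, rfl⟩ := exists_quotCls q
  obtain ⟨h, hh⟩ := quotObj_exact hH (x := x) (y := a) hx.symm
  obtain ⟨⟨w, τ, σ⟩, ⟨hτ, hσ, e⟩, -⟩ := hfac (Groupoid.inv (h ≫ k))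
  dsimp only at hτ hσ e
  refine ⟨w, Groupoid.inv σ, K.inv hσ, (quotCls_sound (Groupoid.inv τ) h (H.inv hτ) hh ?_).symm⟩
  have e' := congrArg Groupoid.inv e
  simpa [Groupoid.inv_eq_inv] using e'.symm

/-- `m` is the class of a composite of strictly composable representatives `f` of `q'` and `g`
of `q`; this is the graph of the composition `(q, q') ↦ q ∘ q'` of the quotient groupoid. -/
def QuotCompRel (q q' m : QuotMor H K) : Prop :=
  ∃ (a b c : S) (f : a ⟶ b) (g : b ⟶ c) (hf : f ∈ K.arrows a b) (hg : g ∈ K.arrows b c),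
    q = quotCls H g hg ∧ q' = quotCls H f hf ∧ m = quotCls H (f ≫ g) (K.mul hf hg)

lemma quotCompRel_mk {a b c : S} {f : a ⟶ b} {g : b ⟶ c} (hf : f ∈ K.arrows a b)
    (hg : g ∈ K.arrows b c) :
    QuotCompRel (quotCls H g hg) (quotCls H f hf) (quotCls H (f ≫ g) (K.mul hf hg)) :=
  ⟨a, b, c, f, g, hf, hg, rfl, rfl, rfl⟩

/-- Trivial isotropy makes the arrows of `H` along which the two witnessing squares meet equal,
so the squares paste. -/
lemma quotCompRel_unique (hH : H.IsWide)
    (htriv : ∀ (a : S) (f : a ⟶ a), f ∈ H.arrows a a → f = 𝟙 a)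
    {q q' m m' : QuotMor H K} (h₁ : QuotCompRel q q' m) (h₂ : QuotCompRel q q' m') : m = m' := by
  obtain ⟨a, b, c, f, g, hf, hg, rfl, rfl, rfl⟩ := h₁
  obtain ⟨a', b', c', f', g', hf', hg', eg, ef, rfl⟩ := h₂
  obtain ⟨u, v, hu, hv, e⟩ := quotCls_exact hH eg
  obtain ⟨v', w, hv', hw, e'⟩ := quotCls_exact hH ef
  have hvv : v' = v := by
    have := htriv _ _ (H.mul hv' (H.inv hv))
    rwa [Groupoid.inv_eq_inv, IsIso.comp_inv_eq, Category.id_comp] at this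
  subst hvv
  refine quotCls_sound u w hu hw ?_
  rw [Category.assoc, e, ← Category.assoc, e', Category.assoc]

lemma exists_compRel (hH : H.IsWide) (hfac : UniqueKHFactorization H K) (q q' : QuotMor H K)
    (h : quotSrc H K q = quotTgt H K q') : ∃ m, QuotCompRel q q' m := by
  obtain ⟨a, b, f, hf, rfl⟩ := exists_quotCls q'
  obtain ⟨c, g, hg, rfl⟩ := exists_rep_src hH hfac q b h
  exact ⟨_, quotCompRel_mk hf hg⟩

/-- The quotient groupoid on `(S/H, K/~_H)`. -/
noncomputable def quotGroupoid (hH : H.IsWide) (hK : K.IsWide) (hfac : UniqueKHFactorization H K)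
    (htriv : ∀ (a : S) (f : a ⟶ a), f ∈ H.arrows a a → f = 𝟙 a) :
    SetGroupoid (QuotObj H) (QuotMor H K) :=
  have key : ∀ (q q' m : QuotMor H K) (h : quotSrc H K q = quotTgt H K q'), QuotCompRel q q' m →
      (exists_compRel hH hfac q q' h).choose = m := fun q q' _ h hm =>
    quotCompRel_unique hH htriv (exists_compRel hH hfac q q' h).choose_spec hm
  { src := quotSrc H K
    tgt := quotTgt H K
    one := quotOne H K hK
    comp := fun q q' h => (exists_compRel hH hfac q q' h).choose
    inv := quotInv H K
    src_one := by rintro ⟨x⟩; rfl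
    tgt_one := by rintro ⟨x⟩; rfl
    src_comp := by
      intro q q' h
      obtain ⟨a, b, c, f, g, hf, hg, -, e, e'⟩ := (exists_compRel hH hfac q q' h).choose_spec
      rw [e', e]; rfl
    tgt_comp := by
      intro q q' h
      obtain ⟨a, b, c, f, g, hf, hg, e, -, e'⟩ := (exists_compRel hH hfac q q' h).choose_spec
      rw [e', e]; rfl
    one_comp := by
      intro q h
      obtain ⟨a, b, f, hf, rfl⟩ := exists_quotCls q
      exact key _ _ _ h ⟨_, _, _, f, 𝟙 b, hf, hK.wide b, rfl, rfl, by simp⟩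
    comp_one := by
      intro q h
      obtain ⟨a, b, f, hf, rfl⟩ := exists_quotCls q
      exact key _ _ _ h ⟨_, _, _, 𝟙 a, f, hK.wide a, hf, rfl, rfl, by simp⟩
    comp_assoc := by
      intro q₁ q₂ q₃ p q r s
      obtain ⟨a, b, f, hf, rfl⟩ := exists_quotCls q₁
      obtain ⟨c, g, hg, rfl⟩ := exists_rep_src hH hfac q₂ b q
      obtain ⟨d, k, hk, rfl⟩ := exists_rep_src hH hfac q₃ c p
      have e₁ := key _ _ _ q (quotCompRel_mk hf hg)
      have e₂ := key _ _ _ p (quotCompRel_mk hg hk)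
      refine (key _ _ (quotCls H (f ≫ g ≫ k) (K.mul hf (K.mul hg hk))) s ?_).trans
        (key _ _ _ r ?_).symm
      · rw [e₂]; exact quotCompRel_mk hf (K.mul hg hk)
      · rw [e₁]; exact ⟨_, _, _, _, _, K.mul hf hg, hk, rfl, rfl, by simp⟩
    src_inv := by rintro ⟨p⟩; rfl
    tgt_inv := by rintro ⟨p⟩; rfl
    inv_comp := by
      intro q h
      obtain ⟨a, b, f, hf, rfl⟩ := exists_quotCls q
      refine key _ _ _ h ⟨_, _, _, f, Groupoid.inv f, hf, K.inv hf, rfl, rfl, ?_⟩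
      simp only [Groupoid.comp_inv]; rfl
    comp_inv := by
      intro q h
      obtain ⟨a, b, f, hf, rfl⟩ := exists_quotCls q
      refine key _ _ _ h ⟨_, _, _, Groupoid.inv f, f, K.inv hf, hf, rfl, rfl, ?_⟩
      simp only [Groupoid.inv_comp]; rfl }

lemma quotGroupoid_comp (hH : H.IsWide) (hK : K.IsWide) (hfac : UniqueKHFactorization H K)
    (htriv : ∀ (a : S) (f : a ⟶ a), f ∈ H.arrows a a → f = 𝟙 a) {q q' m : QuotMor H K}
    (h : (quotGroupoid hH hK hfac htriv).src q = (quotGroupoid hH hK hfac htriv).tgt q')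
    (hm : QuotCompRel q q' m) : (quotGroupoid hH hK hfac htriv).comp q q' h = m :=
  quotCompRel_unique hH htriv (exists_compRel hH hfac q q' h).choose_spec hm

end Quotient

lemma SetGroupoid.comp_congr {Ob Mor : Type*} (G : SetGroupoid Ob Mor) {g g' f f' : Mor}
    (hg : g = g') (hf : f = f') (h : G.src g = G.tgt f) (h' : G.src g' = G.tgt f') :
    G.comp g f h = G.comp g' f' h' := by
  subst hg hf; rfl

/-- The inversion map of a groupoid is determined by the remaining data. -/
lemma SetGroupoid.eq_of_comp_eq {Ob Mor : Type*} {G G' : SetGroupoid Ob Mor}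
    (hs : G.src = G'.src) (ht : G.tgt = G'.tgt) (ho : G.one = G'.one)
    (hc : ∀ g f h h', G.comp g f h = G'.comp g f h') : G = G' := by
  have hi : G.inv = G'.inv := by
    funext f
    have a₁ : G.src (G'.inv f) = G.tgt f := by rw [hs, ht, G'.src_inv]
    have a₂ : G.src f = G.tgt (G.inv f) := by rw [G.tgt_inv]
    have a₃ : G.src (G'.inv f) = G.tgt (G.one (G.src (G'.inv f))) := by rw [G.tgt_one]
    have a₄ : G.src (G'.inv f) = G.tgt (G.comp f (G.inv f) a₂) := by rw [a₁, G.tgt_comp]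
    have a₅ : G.src (G.comp (G'.inv f) f a₁) = G.tgt (G.inv f) := by rw [G.src_comp, G.tgt_inv]
    have a₆ : G.src (G.one (G.tgt (G.inv f))) = G.tgt (G.inv f) := by rw [G.src_one]
    have b₁ : G.comp (G'.inv f) f a₁ = G.one (G.tgt (G.inv f)) := by
      rw [hc _ _ a₁ (G'.src_inv f), G'.inv_comp, G.tgt_inv, ho, hs]
    have b₂ : G.comp f (G.inv f) a₂ = G.one (G.src (G'.inv f)) := by
      rw [G.comp_inv, a₁]
    calc G.inv f = G.comp (G.one (G.tgt (G.inv f))) (G.inv f) a₆ := (G.one_comp _ _).symm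
      _ = G.comp (G.comp (G'.inv f) f a₁) (G.inv f) a₅ := G.comp_congr b₁.symm rfl _ _
      _ = G.comp (G'.inv f) (G.comp f (G.inv f) a₂) a₄ := G.comp_assoc _ _ _ _ _ _ _
      _ = G.comp (G'.inv f) (G.one (G.src (G'.inv f))) a₃ := G.comp_congr rfl b₂ _ _
      _ = G'.inv f := G.comp_one _ _
  cases G; cases G'
  dsimp only at hs ht ho hi hc
  subst hs ht ho hi
  congr
  funext g f h
  exact hc g f h h

/- STATEMENT 10: assume the unique K∘H-factorization property and that `H`
has trivial isotropy.  Let `S̄` be the quotient of `S` by the `H`-orbit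
relation and `K̄` the quotient of the morphisms of `K` by `~_H`.  Then there
is a groupoid structure with objects `S̄` and morphisms `K̄` in which the
source, target and identity are induced by those of `K` (`QuotSpec`), the
composite of `[k]` and `[k']` is `[k ∘ σ(h,k')]` for the unique `h ∈ H` with
`s(h) = t(k')`, `t(h) = s(k)` (`QuotCompSpec`), and the quotient maps form a
functor from `K` to this groupoid (`QuotFunctorSpec`); moreover it is the
unique groupoid structure on `(S̄, K̄)` with these source, target and identity
maps for which the quotient maps form a functor. -/

theorem stmt10 {S : Type*} [Groupoid S] (H K : Subgroupoid S)
    (hHwide : H.IsWide) (hKwide : K.IsWide)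
    (hfac : UniqueKHFactorization H K)
    -- H has trivial isotropy:
    (htriv : ∀ (a : S) (f : a ⟶ a), f ∈ H.arrows a a → f = 𝟙 a) :
    ∃ G : SetGroupoid (QuotObj H) (QuotMor H K),
      QuotSpec H K hKwide G ∧ QuotCompSpec H K G ∧ QuotFunctorSpec H K hKwide G ∧
      ∀ G' : SetGroupoid (QuotObj H) (QuotMor H K),
        QuotFunctorSpec H K hKwide G' → G' = G := by
  have hspec : QuotSpec H K hKwide (quotGroupoid hHwide hKwide hfac htriv) :=
    ⟨fun _ => rfl, fun _ => rfl, fun _ => rfl⟩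
  refine ⟨quotGroupoid hHwide hKwide hfac htriv, hspec, ?_, ⟨hspec, ?_⟩, ?_⟩
  · intro x y x' y' w k k' hk hk' h hh τ σ hτ hσ e hcomp
    -- `σ` represents the class of `k'` and is strictly composable with `k`
    exact quotGroupoid_comp _ _ _ _ hcomp
      ⟨_, _, _, σ, k, hσ, hk, rfl, quotCls_sound h τ hh hτ e, rfl⟩
  · intro a b c g f hg hf hcomp
    exact quotGroupoid_comp _ _ _ _ hcomp (quotCompRel_mk hg hf)
  · rintro G' ⟨⟨hs, ht, ho⟩, hc⟩
    refine SetGroupoid.eq_of_comp_eq ?_ ?_ ?_ ?_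
    · funext q; induction q using Quot.ind with | mk p => exact hs p
    · funext q; induction q using Quot.ind with | mk p => exact ht p
    · funext q; induction q using Quot.ind with | mk x => exact ho x
    · intro q q' h h'
      obtain ⟨m, hm⟩ := exists_compRel hHwide hfac q q' h'
      rw [quotGroupoid_comp _ _ _ _ h' hm]
      obtain ⟨a, b, c, f, g, hf, hg, rfl, rfl, rfl⟩ := hm
      exact hc f g hf hg h
end

section
/- Assume the unique K∘H-factorization property. Let P be the set of pairs (h,k) with h a morphism of H, k a morphism of K, and s(h) = t(k). Then P is the set of morphisms of a groupoid whose objects are the morphisms of K, with: source map (h,k) ↦ k; target map (h,k) ↦ σ(h,k); composition (h', k̃)∘(h,k) = (h'∘h, k) defined whenever k̃ = σ(h,k); identity at k given by (id_{t(k)}, k); and inverse (h,k)⁻¹ = (h⁻¹, σ(h,k)). (This is the action groupoid H ×_S K ⇉ K for the action (h,k) ↦ {}^{h}k appearing in the description of vacant double Lie groupoids.) -/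
/-!
The groupoid is the action groupoid of the action `(h,k) ↦ σ(h,k)` of `H` on the morphisms of `K`.
The unit and composition laws of the first components are those of `H`, so everything reduces to
three facts about `σ`, each read off from the uniqueness of factorizations (`actTgt_eq`):
`σ(id,k) = k`, because `id∘k = k∘id` (`actTgt_one`);
`σ(h'∘h,k) = σ(h',σ(h,k))`, by pasting two factorizations (`actGroupoid`, field `tgt_comp`);
`σ(h⁻¹,σ(h,k)) = k`, because `h∘k = σ∘τ` gives `h⁻¹∘σ = k∘τ⁻¹` (`inv_factorization`).
-/

open CategoryTheory

/-- The set `P` of pairs `(h,k)` with `h` a morphism of `H`, `k` a morphism of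
`K` and `s(h) = t(k)`; encoded as `⟨x, y, z, h, k⟩` with `k : x ⟶ y` in `K`
and `h : y ⟶ z` in `H`. -/
def ActPair {S : Type*} [Groupoid S] (H K : Subgroupoid S) :=
  {q : Σ (x y z : S), (y ⟶ z) × (x ⟶ y) //
    q.2.2.2.1 ∈ H.arrows q.2.1 q.2.2.1 ∧ q.2.2.2.2 ∈ K.arrows q.1 q.2.1}

/-- The target `σ(h,k)` of the pair `(h,k)`: the `K`-part of the chosen factorization of `h∘k`.
Its endpoint is definitionally the endpoint of `h`. -/
noncomputable def actTgt {S : Type*} [Groupoid S] {H K : Subgroupoid S}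
    (hfac : UniqueKHFactorization H K) (q : ActPair H K) : MorK K :=
  ⟨⟨(hfac (q.1.2.2.2.2 ≫ q.1.2.2.2.1)).choose.1, q.1.2.2.1,
    (hfac (q.1.2.2.2.2 ≫ q.1.2.2.2.1)).choose.2.2⟩,
    (hfac (q.1.2.2.2.2 ≫ q.1.2.2.2.1)).choose_spec.1.2.1⟩

/-- Any factorization `h∘k = σ∘τ` computes the target of `(h,k)`, by uniqueness. -/
theorem actTgt_eq {S : Type*} [Groupoid S] {H K : Subgroupoid S}
    (hfac : UniqueKHFactorization H K) {x y z w : S} {h : y ⟶ z} {k : x ⟶ y}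
    (hh : h ∈ H.arrows y z) (hk : k ∈ K.arrows x y) {τ : x ⟶ w} {σ : w ⟶ z}
    (hτ : τ ∈ H.arrows x w) (hσ : σ ∈ K.arrows w z) (e : k ≫ h = τ ≫ σ) :
    actTgt hfac ⟨⟨x, y, z, h, k⟩, hh, hk⟩ = ⟨⟨w, z, σ⟩, hσ⟩ := by
  have key := (hfac (k ≫ h)).choose_spec.2 ⟨w, τ, σ⟩ ⟨hτ, hσ, e⟩
  apply Subtype.ext
  exact congrArg (fun p : Σ w : S, (x ⟶ w) × (w ⟶ z) =>
    (⟨p.1, z, p.2.2⟩ : Σ a b : S, a ⟶ b)) key.symm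

theorem actTgt_endpoint {S : Type*} [Groupoid S] {H K : Subgroupoid S}
    (hfac : UniqueKHFactorization H K) {g f : ActPair H K}
    (e : (⟨⟨g.1.1, g.1.2.1, g.1.2.2.2.2⟩, g.2.2⟩ : MorK K) = actTgt hfac f) :
    f.1.2.2.1 = g.1.2.1 :=
  (congrArg (fun p : MorK K => p.1.2.1) e).symm

/-- The composite `(h',k̃)∘(h,k) = (h'∘h, k)`. The equation `k̃ = σ(h,k)` identifies the source of
`h'` with the target of `h` only propositionally, whence the `eqToHom`. -/
noncomputable def actComp {S : Type*} [Groupoid S] {H K : Subgroupoid S} (hH : H.IsWide)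
    (hfac : UniqueKHFactorization H K) (g f : ActPair H K)
    (e : (⟨⟨g.1.1, g.1.2.1, g.1.2.2.2.2⟩, g.2.2⟩ : MorK K) = actTgt hfac f) : ActPair H K :=
  ⟨⟨f.1.1, f.1.2.1, g.1.2.2.1,
    f.1.2.2.2.1 ≫ eqToHom (actTgt_endpoint hfac e) ≫ g.1.2.2.2.1,
    f.1.2.2.2.2⟩,
    H.mul f.2.1 (H.mul (hH.eqToHom_mem _) g.2.1), f.2.2⟩

theorem actComp_eq {S : Type*} [Groupoid S] {H K : Subgroupoid S} (hH : H.IsWide)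
    (hfac : UniqueKHFactorization H K) {x y z z' w : S} {h : y ⟶ z} {k : x ⟶ y}
    (hh : h ∈ H.arrows y z) (hk : k ∈ K.arrows x y) {σ : w ⟶ z} (hσ : σ ∈ K.arrows w z)
    {h' : z ⟶ z'} (hh' : h' ∈ H.arrows z z')
    (e : (⟨⟨w, z, σ⟩, hσ⟩ : MorK K) = actTgt hfac ⟨⟨x, y, z, h, k⟩, hh, hk⟩) :
    actComp hH hfac ⟨⟨w, z, z', h', σ⟩, hh', hσ⟩ ⟨⟨x, y, z, h, k⟩, hh, hk⟩ e =
      ⟨⟨x, y, z', h ≫ h', k⟩, H.mul hh hh', hk⟩ := by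
  apply Subtype.ext
  simp [actComp]

/-- A pair `g` whose source is `σ(h,k)` has the form `(h', σ)`, with `σ` coming from a
factorization `h∘k = σ∘τ`. -/
theorem actComposable {S : Type*} [Groupoid S] {H K : Subgroupoid S}
    (hfac : UniqueKHFactorization H K) {x y z : S} {h : y ⟶ z} {k : x ⟶ y}
    (hh : h ∈ H.arrows y z) (hk : k ∈ K.arrows x y) (g : ActPair H K)
    (e : (⟨⟨g.1.1, g.1.2.1, g.1.2.2.2.2⟩, g.2.2⟩ : MorK K) =
      actTgt hfac ⟨⟨x, y, z, h, k⟩, hh, hk⟩) :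
    ∃ (w z' : S) (τ : x ⟶ w) (σ : w ⟶ z) (h' : z ⟶ z') (_ : τ ∈ H.arrows x w)
      (hσ : σ ∈ K.arrows w z) (hh' : h' ∈ H.arrows z z'),
      k ≫ h = τ ≫ σ ∧ g = ⟨⟨w, z, z', h', σ⟩, hh', hσ⟩ := by
  obtain ⟨⟨w, τ, σ⟩, ⟨hτ, hσ, hfact⟩, -⟩ := hfac (k ≫ h)
  obtain ⟨⟨w', y', z', h', k'⟩, hh', hk'⟩ := g
  rw [actTgt_eq hfac hh hk hτ hσ hfact] at e
  have e' := congrArg Subtype.val e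
  dsimp only at e' hh' hk'
  cases e'
  exact ⟨w, z', τ, σ, h', hτ, hσ, hh', hfact, rfl⟩

/-- The inverse `(h⁻¹, σ(h,k))`. -/
noncomputable def actInv {S : Type*} [Groupoid S] {H K : Subgroupoid S}
    (hfac : UniqueKHFactorization H K) (q : ActPair H K) : ActPair H K :=
  ⟨⟨(actTgt hfac q).1.1, q.1.2.2.1, q.1.2.1, Groupoid.inv q.1.2.2.2.1,
    (actTgt hfac q).1.2.2⟩, H.inv q.2.1, (actTgt hfac q).2⟩

theorem actInv_eq {S : Type*} [Groupoid S] {H K : Subgroupoid S}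
    (hfac : UniqueKHFactorization H K) {x y z w : S} {h : y ⟶ z} {k : x ⟶ y}
    (hh : h ∈ H.arrows y z) (hk : k ∈ K.arrows x y) {τ : x ⟶ w} {σ : w ⟶ z}
    (hτ : τ ∈ H.arrows x w) (hσ : σ ∈ K.arrows w z) (e : k ≫ h = τ ≫ σ) :
    actInv hfac ⟨⟨x, y, z, h, k⟩, hh, hk⟩ =
      ⟨⟨w, z, y, Groupoid.inv h, σ⟩, H.inv hh, hσ⟩ := by
  have key := (hfac (k ≫ h)).choose_spec.2 ⟨w, τ, σ⟩ ⟨hτ, hσ, e⟩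
  apply Subtype.ext
  exact congrArg (fun p : Σ w : S, (x ⟶ w) × (w ⟶ z) =>
    (⟨p.1, z, y, Groupoid.inv h, p.2.2⟩ : Σ (x y z : S), (y ⟶ z) × (x ⟶ y))) key.symm

/-- `σ(id, k) = k`, since `id∘k = k∘id`. -/
theorem actTgt_one {S : Type*} [Groupoid S] {H K : Subgroupoid S} (hH : H.IsWide)
    (hfac : UniqueKHFactorization H K) (p : MorK K) :
    actTgt hfac ⟨⟨p.1.1, p.1.2.1, p.1.2.1, 𝟙 p.1.2.1, p.1.2.2⟩, hH.wide p.1.2.1, p.2⟩ = p :=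
  actTgt_eq hfac (hH.wide p.1.2.1) p.2 (hH.wide p.1.1) p.2 (by simp)

/-- If `h∘k = σ∘τ`, then `h⁻¹∘σ = k∘τ⁻¹`. -/
theorem inv_factorization {S : Type*} [Groupoid S] {x y z w : S} {h : y ⟶ z} {k : x ⟶ y}
    {τ : x ⟶ w} {σ : w ⟶ z} (e : k ≫ h = τ ≫ σ) :
    σ ≫ Groupoid.inv h = Groupoid.inv τ ≫ k := by
  rw [← cancel_epi τ, ← cancel_mono h]
  simp [← e]

/-- The action groupoid `H ×_S K ⇉ K` of the action `(h,k) ↦ σ(h,k)`. -/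
noncomputable def actGroupoid {S : Type*} [Groupoid S] {H K : Subgroupoid S} (hH : H.IsWide)
    (hfac : UniqueKHFactorization H K) : SetGroupoid (MorK K) (ActPair H K) where
  src q := ⟨⟨q.1.1, q.1.2.1, q.1.2.2.2.2⟩, q.2.2⟩
  tgt := actTgt hfac
  one p := ⟨⟨p.1.1, p.1.2.1, p.1.2.1, 𝟙 p.1.2.1, p.1.2.2⟩, hH.wide p.1.2.1, p.2⟩
  comp := actComp hH hfac
  inv := actInv hfac
  src_one _ := rfl
  tgt_one := actTgt_one hH hfac
  src_comp _ _ _ := rfl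
  tgt_comp := by
    rintro g ⟨⟨x, y, z, h, k⟩, hh, hk⟩ e
    obtain ⟨w, z', τ, σ, h', hτ, hσ, hh', hf, rfl⟩ := actComposable hfac hh hk g e
    dsimp only at τ σ h' hτ hσ hh' hf hh hk
    obtain ⟨⟨w', τ', σ'⟩, ⟨hτ', hσ', hf'⟩, -⟩ := hfac (σ ≫ h')
    dsimp only at hτ' hσ' hf'
    -- pasting the two factorizations: `h'∘h∘k = h'∘σ∘τ = σ'∘τ'∘τ`
    have hpaste : k ≫ h ≫ h' = (τ ≫ τ') ≫ σ' := by
      rw [Category.assoc, ← hf', ← Category.assoc, ← Category.assoc, hf]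
    exact (congrArg (actTgt hfac) (actComp_eq hH hfac hh hk hσ hh' e)).trans
      ((actTgt_eq hfac (H.mul hh hh') hk (H.mul hτ hτ') hσ' hpaste).trans
        (actTgt_eq hfac hh' hσ hτ' hσ' hf').symm)
  one_comp := by
    rintro ⟨⟨x, y, z, h, k⟩, hh, hk⟩ e
    refine (actComp_eq hH hfac hh hk (actTgt hfac _).2 (hH.wide z) e).trans (Subtype.ext ?_)
    simp
  comp_one := by
    rintro ⟨⟨x, y, z, h, k⟩, hh, hk⟩ e
    apply Subtype.ext
    simp [actComp]
  comp_assoc := by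
    intro f g h p q r s
    apply Subtype.ext
    simp [actComp]
  src_inv _ := rfl
  tgt_inv := by
    rintro ⟨⟨x, y, z, h, k⟩, hh, hk⟩
    obtain ⟨⟨w, τ, σ⟩, ⟨hτ, hσ, hf⟩, -⟩ := hfac (k ≫ h)
    exact (congrArg (actTgt hfac) (actInv_eq hfac hh hk hτ hσ hf)).trans
      (actTgt_eq hfac (H.inv hh) hσ (H.inv hτ) hk (inv_factorization hf))
  inv_comp := by
    rintro ⟨⟨x, y, z, h, k⟩, hh, hk⟩ e
    refine (actComp_eq hH hfac hh hk (actTgt hfac _).2 (H.inv hh) e).trans (Subtype.ext ?_)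
    simp
  comp_inv := by
    rintro ⟨⟨x, y, z, h, k⟩, hh, hk⟩ e
    apply Subtype.ext
    simp [actComp, actInv, actTgt]

/- STATEMENT 11: assume the unique K∘H-factorization property.  Then the set
`P = ActPair H K` of pairs `(h,k)` with `h ∈ H`, `k ∈ K`, `s(h) = t(k)` is
the set of morphisms of a groupoid whose objects are the morphisms of `K`,
with source map `(h,k) ↦ k`, target map `(h,k) ↦ σ(h,k)`, composition
`(h',k̃)∘(h,k) = (h'∘h, k)` defined whenever `k̃ = σ(h,k)`, identity at
`k` given by `(id_{t(k)}, k)`, and inverse `(h,k)⁻¹ = (h⁻¹, σ(h,k))`.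
Here `σ(h,k)` and `τ(h,k)` are defined by the unique factorization
`h∘k = σ(h,k)∘τ(h,k)`, i.e. `k ≫ h = τ ≫ σ` with `τ ∈ H`, `σ ∈ K`; the
specifications below quantify over an arbitrary such factorization `(τ,σ)`. -/

theorem stmt11 {S : Type*} [Groupoid S] (H K : Subgroupoid S)
    (hHwide : H.IsWide) (hKwide : K.IsWide)
    (hfac : UniqueKHFactorization H K) :
    ∃ G : SetGroupoid (MorK K) (ActPair H K),
      -- source map: (h,k) ↦ k
      (∀ (q : ActPair H K),
        G.src q = ⟨⟨q.1.1, q.1.2.1, q.1.2.2.2.2⟩, q.2.2⟩) ∧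
      -- target map: (h,k) ↦ σ(h,k)
      (∀ (x y z w : S) (h : y ⟶ z) (k : x ⟶ y)
        (hh : h ∈ H.arrows y z) (hk : k ∈ K.arrows x y)
        (τ : x ⟶ w) (σ : w ⟶ z)
        (_ : τ ∈ H.arrows x w) (hσ : σ ∈ K.arrows w z) (_ : k ≫ h = τ ≫ σ),
        G.tgt ⟨⟨x, y, z, h, k⟩, hh, hk⟩ = ⟨⟨w, z, σ⟩, hσ⟩) ∧
      -- composition: (h', σ(h,k)) ∘ (h,k) = (h'∘h, k)
      (∀ (x y z z' w : S) (h : y ⟶ z) (k : x ⟶ y)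
        (hh : h ∈ H.arrows y z) (hk : k ∈ K.arrows x y)
        (τ : x ⟶ w) (σ : w ⟶ z)
        (_ : τ ∈ H.arrows x w) (hσ : σ ∈ K.arrows w z) (_ : k ≫ h = τ ≫ σ)
        (h' : z ⟶ z') (hh' : h' ∈ H.arrows z z')
        (hcomp : G.src ⟨⟨w, z, z', h', σ⟩, hh', hσ⟩ = G.tgt ⟨⟨x, y, z, h, k⟩, hh, hk⟩),
        G.comp ⟨⟨w, z, z', h', σ⟩, hh', hσ⟩ ⟨⟨x, y, z, h, k⟩, hh, hk⟩ hcomp =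
          ⟨⟨x, y, z', h ≫ h', k⟩, H.mul hh hh', hk⟩) ∧
      -- identity at k: (id_{t(k)}, k)
      (∀ (p : MorK K),
        G.one p = ⟨⟨p.1.1, p.1.2.1, p.1.2.1, 𝟙 p.1.2.1, p.1.2.2⟩,
          hHwide.wide p.1.2.1, p.2⟩) ∧
      -- inverse: (h,k)⁻¹ = (h⁻¹, σ(h,k))
      (∀ (x y z w : S) (h : y ⟶ z) (k : x ⟶ y)
        (hh : h ∈ H.arrows y z) (hk : k ∈ K.arrows x y)
        (τ : x ⟶ w) (σ : w ⟶ z)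
        (_ : τ ∈ H.arrows x w) (hσ : σ ∈ K.arrows w z) (_ : k ≫ h = τ ≫ σ),
        G.inv ⟨⟨x, y, z, h, k⟩, hh, hk⟩ = ⟨⟨w, z, y, Groupoid.inv h, σ⟩, H.inv hh, hσ⟩) := by
  refine ⟨actGroupoid hHwide hfac, fun _ => rfl, ?_, ?_, fun _ => rfl, ?_⟩
  · intro x y z w h k hh hk τ σ hτ hσ e
    exact actTgt_eq hfac hh hk hτ hσ e
  · intro x y z z' w h k hh hk τ σ hτ hσ e h' hh' hcomp
    exact actComp_eq hHwide hfac hh hk hσ hh' hcomp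
  · intro x y z w h k hh hk τ σ hτ hσ e
    exact actInv_eq hfac hh hk hτ hσ e
end
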